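/- Let $p$ and $q$ be distinct odd primes, let $E$ be the $pq$-th cyclotomic field, and let $K := \mathbb{Q}(\zeta_p) \subseteq E$. Then for all integers $i, j$ with $1 \le i \le p-3$ and $1 \le j \le q-1$, the field norm from $E$ to $K$ satisfies $\mathrm{Norm}_{E/K}(\eta'_{i,j}) = U_i(q)$. -/

import Mathlib

/-!
The field `K = ℚ(ζ_p)` is linearly disjoint from `ℚ(ζ_q)`: counting degrees over `ℚ` in
`[E : ℚ] ≥ φ(pq) = (p - 1)(q - 1)` shows that the `q`-th cyclotomic polynomial `Φ_q` stays
irreducible over `K` (`irreducible_cyclotomic_Kp`). Hence `ζ_q^j` has characteristic polynomial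
`Φ_q` over `K`, and for `a ∈ K` with `a ≠ 0, 1` the norm of `1 - ζ_q^j a = a (a⁻¹ - ζ_q^j)` is
`a^(q-1) Φ_q(a⁻¹) = (1 - a^q) / (1 - a)` (`norm_one_sub_mul`).

Applied with `a = ζ_p^s` for `1 ≤ s ≤ p - 1`, this gives the norm of `η'_{i,j}`; the factor `s = 0`
has exponent `0^i = 0`. The result differs from `U_i(q)` only by a power of `ζ_p` with exponent a
multiple of `∑ s^(i+1)`, which is divisible by `p` because `0 < i + 1 < p - 1`
(`prod_phase_eq_one`).
-/


/-- `ζ_m = e^{2πi/m}`. -/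
noncomputable def primRoot (m : ℕ) : ℂ := Complex.exp (2 * (Real.pi : ℂ) * Complex.I / (m : ℂ))

/-- `K = ℚ(ζ_p)` as a subfield of `ℂ`. -/
noncomputable def Kp (p : ℕ) : IntermediateField ℚ ℂ :=
  IntermediateField.adjoin ℚ ({primRoot p} : Set ℂ)

/-- `E = K(ζ_q) = ℚ(ζ_p, ζ_q)`, the `pq`-th cyclotomic field, as an extension
of `K = ℚ(ζ_p)` inside `ℂ`. -/
noncomputable def EoverK (p q : ℕ) : IntermediateField (Kp p) ℂ :=
  IntermediateField.adjoin (Kp p) ({primRoot q} : Set ℂ)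

/-- `η'_{i,j} = ∏_{s=0}^{p-1} (1 - ζ_q^j ζ_p^s)^{s^i}` (with `0^0 = 1`). -/
noncomputable def etaElt' (p q i j : ℕ) : ℂ :=
  ∏ s ∈ Finset.range p, (1 - primRoot q ^ j * primRoot p ^ s) ^ (s ^ i)

/-- `U_i(b) = ∏_{s=1}^{p-1} (ζ_p^{(p+1)(1-b)s/2} · (1-ζ_p^{bs})/(1-ζ_p^s))^{s^i}`. -/
noncomputable def cycUnit (p i : ℕ) (b : ℤ) : ℂ :=
  ∏ s ∈ Finset.Icc 1 (p - 1),
    (primRoot p ^ ((((p + 1) / 2 : ℕ) : ℤ) * (1 - b) * (s : ℤ)) *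
      ((1 - primRoot p ^ (b * (s : ℤ))) / (1 - primRoot p ^ s))) ^ (s ^ i)

open Polynomial in
/-- If `Φ_q` is irreducible over `K`, then `N_{L/K}(1 - y a) = (1 - a ^ q) / (1 - a)` for a primitive
`q`-th root of unity `y`: up to the factor `a`, the norm is the value at `a⁻¹` of the characteristic
polynomial `Φ_q` of `y`. -/
theorem norm_one_sub_mul {K L : Type*} [Field K] [Field L] [Algebra K L] {q : ℕ}
    (hq : q.Prime) [IsCyclotomicExtension {q} K L] (hirr : Irreducible (cyclotomic q K))
    {y : L} (hy : IsPrimitiveRoot y q) {a : K} (ha0 : a ≠ 0) (ha1 : a ≠ 1) :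
    Algebra.norm K (1 - y * algebraMap K L a) = (1 - a ^ q) / (1 - a) := by
  have : NeZero q := ⟨hq.ne_zero⟩
  have : Fact q.Prime := ⟨hq⟩
  have : NeZero (q : K) := ⟨by
    have := IsCyclotomicExtension.neZero' q K L
    exact this.out⟩
  have hmin : minpoly K y = cyclotomic q K :=
    (hy.minpoly_eq_cyclotomic_of_irreducible hirr).symm
  have hfin : Module.finrank K L = q - 1 := by
    rw [IsCyclotomicExtension.finrank (n := q) L hirr, Nat.totient_prime hq]
  have hchar : Algebra.norm K (algebraMap K L a⁻¹ - y) = (cyclotomic q K).eval a⁻¹ := by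
    let pb := hy.powerBasis K
    rw [← hmin, ← IsPrimitiveRoot.powerBasis_gen K hy, ← charpoly_leftMulMatrix pb,
      Matrix.eval_charpoly, Algebra.norm_eq_matrix_det pb.basis, map_sub, AlgHom.commutes]
    rfl
  have hfac : 1 - y * algebraMap K L a = algebraMap K L a * (algebraMap K L a⁻¹ - y) := by
    rw [mul_sub, ← map_mul, mul_inv_cancel₀ ha0, map_one, mul_comm]
  have hgeom : (cyclotomic q K).eval a⁻¹ * (a⁻¹ - 1) = a⁻¹ ^ q - 1 := by
    rw [cyclotomic_prime, eval_finsetSum]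
    simpa using geom_sum_mul a⁻¹ q
  have h1 : 1 - a ≠ 0 := sub_ne_zero.mpr ha1.symm
  rw [hfac, map_mul, Algebra.norm_algebraMap, hfin, hchar, eq_div_iff h1]
  have h2 : 1 - a = a * (a⁻¹ - 1) := by rw [mul_sub, mul_inv_cancel₀ ha0, mul_one]
  have h3 : a ^ q = a ^ (q - 1) * a := by rw [← pow_succ, Nat.sub_add_cancel hq.one_le]
  calc _ = a ^ (q - 1) * a * ((cyclotomic q K).eval a⁻¹ * (a⁻¹ - 1)) := by rw [h2]; ring
    _ = _ := by rw [hgeom, ← h3, inv_pow, mul_sub, mul_inv_cancel₀ (pow_ne_zero _ ha0), mul_one]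

theorem primRoot_isPrimitiveRoot {m : ℕ} (hm : m ≠ 0) : IsPrimitiveRoot (primRoot m) m :=
  Complex.isPrimitiveRoot_exp m hm

/-- Unlike `IsPrimitiveRoot.intermediateField_adjoin_isCyclotomicExtension`, this does not assume
that the ambient field is algebraic over `K`, so it applies inside `ℂ`. -/
theorem isCyclotomicExtension_adjoin {K L : Type*} [Field K] [Field L] [Algebra K L] {n : ℕ}
    [NeZero n] {ζ : L} (hζ : IsPrimitiveRoot ζ n) :
    IsCyclotomicExtension {n} K (IntermediateField.adjoin K {ζ}) := by
  change IsCyclotomicExtension {n} K (IntermediateField.adjoin K {ζ}).toSubalgebra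
  rw [IntermediateField.adjoin_simple_toSubalgebra_of_isAlgebraic
    ((hζ.isIntegral (NeZero.pos n)).tower_top (A := K)).isAlgebraic]
  exact hζ.adjoin_isCyclotomicExtension K

open Polynomial in
/-- The minimal polynomial of `ζ_q` over `ℚ(ζ_p)` divides `Φ_q` and has degree at least `q - 1`,
since `(p - 1)(q - 1) ≤ [E : ℚ] = [E : K] (p - 1)`. -/
theorem irreducible_cyclotomic_Kp {p q : ℕ} (hp : p.Prime) (hq : q.Prime) (hpq : p ≠ q) :
    Irreducible (cyclotomic q (Kp p)) := by
  have : NeZero p := ⟨hp.ne_zero⟩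
  have : NeZero q := ⟨hq.ne_zero⟩
  have hzp := primRoot_isPrimitiveRoot hp.ne_zero
  have hzq := primRoot_isPrimitiveRoot hq.ne_zero
  have : IsCyclotomicExtension {p} ℚ (Kp p) :=
    isCyclotomicExtension_adjoin hzp
  have : IsCyclotomicExtension {q} (Kp p) (EoverK p q) :=
    isCyclotomicExtension_adjoin hzq
  have : FiniteDimensional ℚ (Kp p) := IsCyclotomicExtension.finiteDimensional {p} ℚ (Kp p)
  have : FiniteDimensional (Kp p) (EoverK p q) :=
    IsCyclotomicExtension.finiteDimensional {q} (Kp p) (EoverK p q)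
  have : FiniteDimensional ℚ (EoverK p q) := FiniteDimensional.trans ℚ (Kp p) (EoverK p q)
  let w : Kp p := ⟨primRoot p, IntermediateField.mem_adjoin_simple_self ℚ _⟩
  let z : EoverK p q := ⟨primRoot q, IntermediateField.mem_adjoin_simple_self (Kp p) _⟩
  have hw : IsPrimitiveRoot (algebraMap (Kp p) (EoverK p q) w) p :=
    IsPrimitiveRoot.of_map_of_injective (f := (EoverK p q).val) hzp
      (EoverK p q).val.injective
  have hz : IsPrimitiveRoot z q :=
    IsPrimitiveRoot.of_map_of_injective (f := (EoverK p q).val) hzq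
      (EoverK p q).val.injective
  have hcop : Nat.Coprime p q := (Nat.coprime_primes hp hq).mpr hpq
  have hle := hw.lcm_totient_le_finrank hz (K := ℚ)
    (cyclotomic.irreducible_rat (Nat.lcm_pos hp.pos hq.pos))
  rw [hcop.lcm_eq_mul, Nat.totient_mul hcop, ← Module.finrank_mul_finrank ℚ (Kp p),
    IsCyclotomicExtension.finrank (n := p) (Kp p) (cyclotomic.irreducible_rat hp.pos)] at hle
  have hle' := Nat.le_of_mul_le_mul_left hle (Nat.totient_pos.mpr hp.pos)
  have hfr : Module.finrank (Kp p) (EoverK p q) = (minpoly (Kp p) (primRoot q)).natDegree :=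
    IntermediateField.adjoin.finrank ((hzq.isIntegral hq.pos).tower_top)
  rw [hfr] at hle'
  have hint : IsIntegral (Kp p) (primRoot q) := (hzq.isIntegral hq.pos).tower_top
  have hdvd : minpoly (Kp p) (primRoot q) ∣ cyclotomic q (Kp p) := by
    apply minpoly.dvd
    rw [aeval_def, ← eval_map, map_cyclotomic]
    exact hzq.isRoot_cyclotomic hq.pos
  rw [eq_of_monic_of_dvd_of_natDegree_le (minpoly.monic hint) (cyclotomic.monic q _) hdvd
    (by rwa [natDegree_cyclotomic])]
  exact minpoly.irreducible hint

/-- The power sum over `1, …, p - 1` vanishes in `ZMod p` because `p - 1` does not divide `k`. -/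
theorem dvd_sum_pow {p k : ℕ} (hp : p.Prime) (hk0 : k ≠ 0) (hk : k < p - 1) :
    p ∣ ∑ s ∈ Finset.Icc 1 (p - 1), s ^ k := by
  have : Fact p.Prime := ⟨hp⟩
  have h := FiniteField.sum_pow_lt_card_sub_one (ZMod p) k (by rwa [ZMod.card])
  have hr : ∑ s ∈ Finset.range p, (s : ZMod p) ^ k = 0 := by
    rw [← h]
    refine Finset.sum_bij' (fun s _ => (s : ZMod p)) (fun x _ => x.val) ?_ ?_ ?_ ?_ ?_
    · simp
    · intro x _; simpa using ZMod.val_lt x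
    · intro s hs; exact ZMod.val_cast_of_lt (Finset.mem_range.mp hs)
    · intro x _; simp
    · simp
  rw [← CharP.cast_eq_zero_iff (ZMod p) p]
  push_cast
  obtain ⟨m, rfl⟩ : ∃ m, p = m + 1 := ⟨p - 1, (Nat.sub_add_cancel hp.one_le).symm⟩
  rw [Finset.range_eq_Ico, Finset.sum_eq_sum_Ico_succ_bot (Nat.succ_pos m)] at hr
  simpa [hk0, Finset.Ico_add_one_right_eq_Icc] using hr

/-- The normalizing powers of `ζ_p` in `U_i(b)` contribute trivially, since their total exponent is
`c * ∑ s ^ (i + 1)`. -/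
theorem prod_phase_eq_one {p i : ℕ} (hp : p.Prime) (hi1 : 1 ≤ i) (hi : i ≤ p - 3) (c : ℤ) :
    ∏ s ∈ Finset.Icc 1 (p - 1), (primRoot p ^ (c * (s : ℤ))) ^ (s ^ i) = 1 := by
  have hw := primRoot_isPrimitiveRoot hp.ne_zero
  obtain ⟨m, hm⟩ := dvd_sum_pow (k := i + 1) hp (by omega) (by omega)
  have h : ∀ s ∈ Finset.Icc 1 (p - 1), (primRoot p ^ (c * (s : ℤ))) ^ (s ^ i)
      = (primRoot p ^ s ^ (i + 1)) ^ c := by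
    intro s _
    rw [← zpow_natCast, ← zpow_natCast (primRoot p), ← zpow_mul, ← zpow_mul]
    congr 1
    push_cast
    ring
  rw [Finset.prod_congr rfl h, Finset.prod_zpow, Finset.prod_pow_eq_pow_sum, hm, pow_mul,
    hw.pow_eq_one, one_pow, one_zpow]

/-- For distinct odd primes `p, q`, `1 ≤ i ≤ p-3`, `1 ≤ j ≤ q-1`,
the norm from `E = ℚ(ζ_p, ζ_q)` to `K = ℚ(ζ_p)` satisfies
`N_{E/K}(η'_{i,j}) = U_i(q)`. -/
theorem norm_eta'_eq_cycUnit (p q : ℕ) (hp : p.Prime) (hq : q.Prime)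
    (hpo : Odd p) (hqo : Odd q) (hpq : p ≠ q)
    (i j : ℕ) (hi1 : 1 ≤ i) (hi : i ≤ p - 3) (hj1 : 1 ≤ j) (hj : j ≤ q - 1)
    (x : EoverK p q) (hx : (x : ℂ) = etaElt' p q i j) :
    ((Algebra.norm (Kp p) x : Kp p) : ℂ) = cycUnit p i (q : ℤ) := by
  have : NeZero q := ⟨hq.ne_zero⟩
  have hzp := primRoot_isPrimitiveRoot hp.ne_zero
  have hzq := primRoot_isPrimitiveRoot hq.ne_zero
  have : IsCyclotomicExtension {q} (Kp p) (EoverK p q) :=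
    isCyclotomicExtension_adjoin hzq
  let w : Kp p := ⟨primRoot p, IntermediateField.mem_adjoin_simple_self ℚ _⟩
  let z : EoverK p q := ⟨primRoot q, IntermediateField.mem_adjoin_simple_self (Kp p) _⟩
  have hw : IsPrimitiveRoot w p :=
    IsPrimitiveRoot.of_map_of_injective (f := (Kp p).val) hzp (Kp p).val.injective
  have hz : IsPrimitiveRoot z q :=
    IsPrimitiveRoot.of_map_of_injective (f := (EoverK p q).val) hzq
      (EoverK p q).val.injective
  have hy : IsPrimitiveRoot (z ^ j) q :=
    hz.pow_of_coprime j (Nat.coprime_of_lt_prime (by omega) (by have := hq.two_le; omega) hq).symm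
  -- the factor at `s = 0` is trivial because its exponent is `0 ^ i = 0`
  have hx' : x = ∏ s ∈ Finset.Icc 1 (p - 1),
      (1 - z ^ j * algebraMap (Kp p) (EoverK p q) (w ^ s)) ^ (s ^ i) := by
    apply (EoverK p q).val.injective
    have hi0 : i ≠ 0 := by omega
    have h0 : etaElt' p q i j = ∏ s ∈ Finset.Icc 1 (p - 1),
        (1 - primRoot q ^ j * primRoot p ^ s) ^ (s ^ i) := by
      have hr : Finset.range p = Finset.Ico 0 (p - 1 + 1) := by
        rw [Nat.sub_add_cancel hp.one_le, Finset.range_eq_Ico]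
      rw [etaElt', hr, Finset.prod_eq_prod_Ico_succ_bot (Nat.succ_pos _)]
      simp [hi0, Finset.Ico_add_one_right_eq_Icc]
    rw [map_prod]
    exact hx.trans h0
  have hnorm : Algebra.norm (Kp p) x = ∏ s ∈ Finset.Icc 1 (p - 1),
      ((1 - (w ^ s) ^ q) / (1 - w ^ s)) ^ (s ^ i) := by
    rw [hx', map_prod]
    refine Finset.prod_congr rfl fun s hs => ?_
    rw [Finset.mem_Icc] at hs
    rw [map_pow, norm_one_sub_mul hq (irreducible_cyclotomic_Kp hp hq hpq) hy
      (pow_ne_zero _ (hw.ne_zero hp.ne_zero))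
      (hw.pow_ne_one_of_pos_of_lt (by omega) (by omega))]
  have hcoe : ((Algebra.norm (Kp p) x : Kp p) : ℂ) = ∏ s ∈ Finset.Icc 1 (p - 1),
      ((1 - (primRoot p ^ s) ^ q) / (1 - primRoot p ^ s)) ^ (s ^ i) := by
    rw [hnorm]
    exact map_prod (Kp p).val _ _
  rw [hcoe, cycUnit]
  simp_rw [mul_pow]
  rw [Finset.prod_mul_distrib, prod_phase_eq_one hp hi1 hi, one_mul]
  refine Finset.prod_congr rfl fun s _ => ?_
  rw [← pow_mul, mul_comm s q]
  norm_cast
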